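/- Let w be a non-increasing positive function on I=(0,a), 0<a≤∞, that is regular: W(t)=∫₀ᵗ w dm ≤ C·t·w(t) for some C ≥ 1 and all t∈I. Let f₁,…,fₙ be measurable functions on I, each with f_i* finite and integrable on (0,x) for all x∈I, and let v₁,…,vₙ : I→[0,∞) be measurable with v_i* = w (a.e.) and supp f_i ⊆ supp v_i for each i. Then for every x ∈ (0, ∫_I w dm), ∫₀ˣ ((Σᵢ fᵢ)*/w)^{*,w} dm ≤ C·Σᵢ ∫₀ˣ (fᵢ/vᵢ)^{*,vᵢ} dm, with the convention fᵢ/vᵢ = 0 off supp fᵢ, where (Σᵢ fᵢ)* is the decreasing rearrangement of |Σᵢ fᵢ|. -/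

import Mathlib

open MeasureTheory Set Filter
open scoped ENNReal

/-- The interval `(0, a)` for `a : ℝ≥0∞` (equals `(0,∞)` when `a = ∞`). -/
def Iset (a : ℝ≥0∞) : Set ℝ := {x : ℝ | 0 < x ∧ ENNReal.ofReal x < a}

/-- Lebesgue measure restricted to the interval `(0,a)`. -/
noncomputable def volI (a : ℝ≥0∞) : Measure ℝ := volume.restrict (Iset a)

/-- Decreasing rearrangement of an `ℝ≥0∞`-valued function with respect to a measure `μ`:
`f^{*,μ}(t) = inf {s > 0 : μ({f > s}) ≤ t}`. -/
noncomputable def rearrE (μ : Measure ℝ) (f : ℝ → ℝ≥0∞) (t : ℝ) : ℝ≥0∞ :=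
  sInf {s : ℝ≥0∞ | 0 < s ∧ μ {x | s < f x} ≤ ENNReal.ofReal t}

/-- Decreasing rearrangement of a real function with respect to a measure `μ` on `ℝ`:
`f^{*,μ}(t) = inf {s > 0 : μ({|f| > s}) ≤ t}`. -/
noncomputable def rearr (μ : Measure ℝ) (f : ℝ → ℝ) (t : ℝ) : ℝ≥0∞ :=
  rearrE μ (fun x => ENNReal.ofReal |f x|) t

/-- The measure `w·dm` on the set `I`. -/
noncomputable def wMeas (I : Set ℝ) (w : ℝ → ℝ) : Measure ℝ :=
  (volume.restrict I).withDensity (fun t => ENNReal.ofReal (w t))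

/-- `W(t) = ∫₀ᵗ w dm`. -/
noncomputable def Wfun (w : ℝ → ℝ) (t : ℝ) : ℝ := ∫ s in Set.Ioo (0:ℝ) t, w s

/-- `b = ∫_I w dm` as an extended real number. -/
noncomputable def bval (a : ℝ≥0∞) (w : ℝ → ℝ) : ℝ≥0∞ := ∫⁻ x in Iset a, ENNReal.ofReal (w x)

/-!
The integral `∫₀ˣ g^{*,μ}` is the `K`-functional of `g` between `L¹(μ)` and `L^∞`: it is the least
value of `∫ (g - s)₊ dμ + x s` over levels `s`, attained at `s = g^{*,μ}(x)`. With `sᵢ` the optimal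
levels of `gᵢ = |fᵢ / vᵢ|` in `L¹(vᵢ dμ)`, the theorem thus reduces to testing `(∑ fᵢ)^* / w` at the
level `C ∑ sᵢ`. Let `V = ∑ sᵢ vᵢ`. Unlike `V^*(t)` itself, the average of `V^*` over `(0, t)` is
subadditive in `V`; regularity bounds this average for each `vᵢ`, so `V^* ≤ C (∑ sᵢ) w`. Hence the
part of `(∑ fᵢ)^* / w` above that level has `L¹(w dm)` norm at most `∫ ((∑ fᵢ)^* - V^*)₊`, which
rearrangement, being order-contractive in `L¹`, bounds by `∫ (|∑ fᵢ| - V)₊`, and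
`(|∑ fᵢ| - V)₊ ≤ ∑ vᵢ (gᵢ - sᵢ)₊`.
-/

theorem measurableSet_Iset (a : ℝ≥0∞) : MeasurableSet (Iset a) :=
  measurableSet_Ioi.inter (measurableSet_lt ENNReal.measurable_ofReal measurable_const)

theorem Iset_mono {a b : ℝ≥0∞} (hab : a ≤ b) : Iset a ⊆ Iset b :=
  fun _ hx => ⟨hx.1, hx.2.trans_le hab⟩

theorem Ioo_subset_Iset {a : ℝ≥0∞} {t : ℝ} (ht : t ∈ Iset a) : Ioo 0 t ⊆ Iset a :=
  fun _ hu => ⟨hu.1, (ENNReal.ofReal_le_ofReal hu.2.le).trans_lt ht.2⟩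

theorem volume_Iset (a : ℝ≥0∞) : volume (Iset a) = a := by
  cases a with
  | top =>
    have h_Ioi : Iset ∞ = Ioi 0 := by ext; simp [Iset]
    rw [h_Ioi, Real.volume_Ioi]
  | coe a =>
    have h_Ioo : Iset a = Ioo 0 (a : ℝ) := by
      ext r
      refine and_congr_right fun hr => ?_
      rw [← ENNReal.ofReal_coe_nnreal, ENNReal.ofReal_lt_ofReal_iff_of_nonneg hr.le]
    simp [h_Ioo]

theorem volume_Iset_sdiff_Iset (a b : ℝ≥0∞) : volume (Iset a \ Iset b) = a - b := by
  rcases le_total a b with hab | hba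
  · rw [sdiff_eq_empty.2 (Iset_mono hab), measure_empty, tsub_eq_zero_of_le hab]
  rcases eq_or_ne b ∞ with rfl | hb
  · rw [sdiff_eq_empty.2 (Iset_mono le_top), measure_empty, ENNReal.sub_top]
  · rw [measure_sdiff (Iset_mono hba) (measurableSet_Iset b).nullMeasurableSet
      (by rwa [volume_Iset]), volume_Iset, volume_Iset]

instance (a : ℝ≥0∞) : SFinite (volI a) := inferInstanceAs (SFinite (volume.restrict (Iset a)))

section LayerCake

variable {α : Type*} [MeasurableSpace α]

theorem measure_lt_le_of_forall_lt {μ : Measure α} {g : α → ℝ≥0∞} {r c : ℝ≥0∞}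
    (h : ∀ s, r < s → μ {x | s < g x} ≤ c) : μ {x | r < g x} ≤ c := by
  rcases eq_or_ne r ∞ with rfl | hr
  · simp
  obtain ⟨u, hu_anti, hu_mem, hu_lim⟩ := exists_seq_strictAnti_tendsto' hr.lt_top
  have h_union : {x | r < g x} = ⋃ n, {x | u n < g x} := by
    ext y
    simp only [mem_ofPred_eq, mem_iUnion]
    exact ⟨fun hy => (hu_lim.eventually (gt_mem_nhds hy)).exists,
      fun ⟨n, hn⟩ => (hu_mem n).1.trans hn⟩
  have h_mono : Monotone fun n => {x | u n < g x} :=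
    fun _ _ hmn _ hy => (hu_anti.antitone hmn).trans_lt hy
  rw [h_union, h_mono.measure_iUnion]
  exact iSup_le fun n => h _ (hu_mem n).1

theorem lintegral_tsub_eq_lintegral_measure (μ : Measure α) [SFinite μ] {f g : α → ℝ≥0∞}
    (hf : Measurable f) (hg : Measurable g) :
    ∫⁻ y, (f y - g y) ∂μ
      = ∫⁻ r in Ioi (0 : ℝ), μ {y | g y ≤ ENNReal.ofReal r ∧ ENNReal.ofReal r < f y} := by
  let slab : Set (α × ℝ) :=
    {p | g p.1 ≤ ENNReal.ofReal p.2 ∧ ENNReal.ofReal p.2 < f p.1}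
  have h_slab : MeasurableSet slab :=
    (measurableSet_le (hg.comp measurable_fst) measurable_snd.ennreal_ofReal).inter
      (measurableSet_lt measurable_snd.ennreal_ofReal (hf.comp measurable_fst))
  have h_section (y : α) :
      volume.restrict (Ioi 0) (Prod.mk y ⁻¹' slab) = f y - g y := by
    rw [Measure.restrict_apply' measurableSet_Ioi, ← volume_Iset_sdiff_Iset]
    congr 1
    ext r
    simp only [slab, Iset, mem_inter_iff, mem_preimage, mem_ofPred_eq, mem_Ioi, Set.mem_sdiff]
    grind
  simp_rw [← h_section]
  rw [← Measure.prod_apply h_slab, Measure.prod_apply_symm h_slab]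
  rfl

end LayerCake

section Rearrangement

variable (μ : Measure ℝ)

theorem rearrE_le_iff (g : ℝ → ℝ≥0∞) (t : ℝ) (r : ℝ≥0∞) :
    rearrE μ g t ≤ r ↔ μ {x | r < g x} ≤ ENNReal.ofReal t := by
  constructor
  · refine fun h => measure_lt_le_of_forall_lt fun s hs => ?_
    obtain ⟨s', hs', hlt⟩ := sInf_lt_iff.1 (h.trans_lt hs)
    exact (measure_mono fun x (hx : s < g x) => hlt.trans hx).trans hs'.2
  · refine fun h => le_of_forall_gt_imp_ge_of_dense fun s hs => sInf_le ⟨pos_of_gt hs, ?_⟩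
    exact (measure_mono fun x (hx : s < g x) => hs.trans hx).trans h

theorem lt_rearrE_iff (g : ℝ → ℝ≥0∞) (t : ℝ) (r : ℝ≥0∞) :
    r < rearrE μ g t ↔ ENNReal.ofReal t < μ {x | r < g x} := by
  simpa using (rearrE_le_iff μ g t r).not

theorem measure_rearrE_lt_le (g : ℝ → ℝ≥0∞) (t : ℝ) :
    μ {x | rearrE μ g t < g x} ≤ ENNReal.ofReal t :=
  (rearrE_le_iff μ g t _).1 le_rfl

theorem rearrE_antitone (g : ℝ → ℝ≥0∞) : Antitone (rearrE μ g) := fun s t hst =>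
  (rearrE_le_iff μ g t _).2 <|
    (measure_rearrE_lt_le μ g s).trans (ENNReal.ofReal_le_ofReal hst)

@[fun_prop]
theorem measurable_rearrE (g : ℝ → ℝ≥0∞) : Measurable (rearrE μ g) :=
  (rearrE_antitone μ g).measurable

variable {μ} in
theorem rearrE_congr_ae {g h : ℝ → ℝ≥0∞} (hgh : g =ᵐ[μ] h) : rearrE μ g = rearrE μ h := by
  refine funext fun t => eq_of_forall_lt_iff fun r => ?_
  have h_measure : μ {x | r < g x} = μ {x | r < h x} :=
    measure_congr (hgh.mono fun x hx => congrArg (r < ·) hx)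
  rw [lt_rearrE_iff, lt_rearrE_iff, h_measure]

theorem rearrE_tsub_const (g : ℝ → ℝ≥0∞) (s : ℝ≥0∞) (t : ℝ) :
    rearrE μ (fun y => g y - s) t = rearrE μ g t - s :=
  eq_of_forall_lt_iff fun r => by simp only [lt_rearrE_iff, lt_tsub_iff_right]

theorem rearrE_const_mul_le (c : ℝ≥0∞) (g : ℝ → ℝ≥0∞) (t : ℝ) :
    rearrE μ (fun y => c * g y) t ≤ c * rearrE μ g t :=
  have h_subset : {y | c * rearrE μ g t < c * g y} ⊆ {y | rearrE μ g t < g y} :=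
    ofPred_subset_ofPred.2 fun _ hy => lt_of_mul_lt_mul_left hy zero_le
  (rearrE_le_iff μ _ t _).2 <| (measure_mono h_subset).trans (measure_rearrE_lt_le μ g t)

theorem volume_rearrE_le_lt (g h : ℝ → ℝ≥0∞) (r : ℝ≥0∞) :
    volume.restrict (Ioi 0) {t | rearrE μ h t ≤ r ∧ r < rearrE μ g t}
      = μ {x | r < g x} - μ {x | r < h x} := by
  rw [Measure.restrict_apply' measurableSet_Ioi, ← volume_Iset_sdiff_Iset]
  congr 1
  ext t
  simp only [rearrE_le_iff, lt_rearrE_iff, Iset, mem_inter_iff, mem_ofPred_eq, mem_Ioi,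
    Set.mem_sdiff]
  grind

variable [SFinite μ] {g h : ℝ → ℝ≥0∞}

theorem lintegral_rearrE_tsub_rearrE_le (hg : Measurable g) (hh : Measurable h) :
    ∫⁻ t in Ioi (0 : ℝ), (rearrE μ g t - rearrE μ h t) ≤ ∫⁻ y, (g y - h y) ∂μ := by
  rw [lintegral_tsub_eq_lintegral_measure _ (measurable_rearrE μ g) (measurable_rearrE μ h),
    lintegral_tsub_eq_lintegral_measure μ hg hh]
  refine lintegral_mono fun r => ?_
  rw [volume_rearrE_le_lt]
  exact le_measure_sdiff.trans (measure_mono fun _ hy => ⟨not_lt.1 hy.2, hy.1⟩)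

theorem lintegral_rearrE (hg : Measurable g) :
    ∫⁻ t in Ioi (0 : ℝ), rearrE μ g t = ∫⁻ y, g y ∂μ := by
  have h_zero : rearrE μ 0 = 0 :=
    funext fun t => nonpos_iff_eq_zero.1 <| (rearrE_le_iff μ 0 t 0).2 (by simp)
  calc ∫⁻ t in Ioi (0 : ℝ), rearrE μ g t
      = ∫⁻ t in Ioi (0 : ℝ), (rearrE μ g t - rearrE μ 0 t) := by
        simp only [h_zero, Pi.zero_apply, tsub_zero]
    _ = ∫⁻ r in Ioi (0 : ℝ), (μ {y | ENNReal.ofReal r < g y} - μ {_y | ENNReal.ofReal r < 0}) := by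
        rw [lintegral_tsub_eq_lintegral_measure _ (measurable_rearrE μ g) (measurable_rearrE μ 0)]
        simp only [volume_rearrE_le_lt, Pi.zero_apply]
    _ = ∫⁻ y, (g y - 0) ∂μ := by
        rw [lintegral_tsub_eq_lintegral_measure μ hg measurable_const]
        simp
    _ = ∫⁻ y, g y ∂μ := by simp only [tsub_zero]

theorem lintegral_rearrE_tsub_const (hg : Measurable g) (s : ℝ≥0∞) :
    ∫⁻ t in Ioi (0 : ℝ), (rearrE μ g t - s) = ∫⁻ y, (g y - s) ∂μ := by
  simpa only [rearrE_tsub_const] using lintegral_rearrE μ (hg.sub_const s)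

theorem setLIntegral_rearrE_le (hg : Measurable g) (s : ℝ≥0∞) (x : ℝ) :
    ∫⁻ t in Ioo 0 x, rearrE μ g t ≤ ∫⁻ y, (g y - s) ∂μ + ENNReal.ofReal x * s := by
  calc ∫⁻ t in Ioo 0 x, rearrE μ g t
      ≤ ∫⁻ t in Ioo 0 x, ((rearrE μ g t - s) + s) := lintegral_mono fun t => le_tsub_add
    _ = (∫⁻ t in Ioo 0 x, (rearrE μ g t - s)) + ENNReal.ofReal x * s := by
        rw [lintegral_add_right _ measurable_const]
        simp [mul_comm]
    _ ≤ (∫⁻ t in Ioi (0 : ℝ), (rearrE μ g t - s)) + ENNReal.ofReal x * s := by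
        gcongr
        exact Ioo_subset_Ioi_self
    _ = ∫⁻ y, (g y - s) ∂μ + ENNReal.ofReal x * s := by
        rw [lintegral_rearrE_tsub_const μ hg]

theorem setLIntegral_rearrE_eq (hg : Measurable g) (x : ℝ) :
    ∫⁻ t in Ioo 0 x, rearrE μ g t
      = ∫⁻ y, (g y - rearrE μ g x) ∂μ + ENNReal.ofReal x * rearrE μ g x := by
  set s := rearrE μ g x
  have h_support : Function.support (fun t => rearrE μ g t - s) ⊆ Iio x := fun t ht => by
    contrapose! ht
    exact Function.notMem_support.2 (tsub_eq_zero_of_le (rearrE_antitone μ g (not_lt.1 ht)))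
  calc ∫⁻ t in Ioo 0 x, rearrE μ g t
      = ∫⁻ t in Ioo 0 x, ((rearrE μ g t - s) + s) :=
        setLIntegral_congr_fun measurableSet_Ioo fun t ht =>
          (tsub_add_cancel_of_le (rearrE_antitone μ g ht.2.le)).symm
    _ = (∫⁻ t in Ioo 0 x, (rearrE μ g t - s)) + ENNReal.ofReal x * s := by
        rw [lintegral_add_right _ measurable_const]
        simp [mul_comm]
    _ = (∫⁻ t in Ioi (0 : ℝ), (rearrE μ g t - s)) + ENNReal.ofReal x * s := by
        rw [← Ioi_inter_Iio, inter_comm, ← Measure.restrict_restrict measurableSet_Iio,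
          setLIntegral_eq_of_support_subset h_support]
    _ = ∫⁻ y, (g y - s) ∂μ + ENNReal.ofReal x * s := by
        rw [lintegral_rearrE_tsub_const μ hg]

theorem mul_rearrE_le_setLIntegral (hg : Measurable g) (t : ℝ) :
    ENNReal.ofReal t * rearrE μ g t ≤ ∫⁻ u in Ioo 0 t, rearrE μ g u :=
  le_add_self.trans (setLIntegral_rearrE_eq μ hg t).ge

end Rearrangement

theorem sum_tsub_sum_le {ι M : Type*} [AddCommMonoid M] [PartialOrder M] [IsOrderedAddMonoid M]
    [Sub M] [OrderedSub M] (s : Finset ι) (b c : ι → M) :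
    ∑ i ∈ s, b i - ∑ i ∈ s, c i ≤ ∑ i ∈ s, (b i - c i) := by
  rw [tsub_le_iff_right, ← Finset.sum_add_distrib]
  exact Finset.sum_le_sum fun i _ => le_tsub_add

section Sums

variable {ι : Type*} [Fintype ι] {μ : Measure ℝ} {g v : ι → ℝ → ℝ≥0∞}

theorem lintegral_tsub_sum_const_mul_le {F : ℝ → ℝ≥0∞} (hg : ∀ i, Measurable (g i))
    (hv : ∀ i, Measurable (v i)) (hF : ∀ᵐ y ∂μ, F y ≤ ∑ i, v i y * g i y) (s : ι → ℝ≥0∞) :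
    ∫⁻ y, (F y - ∑ i, s i * v i y) ∂μ ≤ ∑ i, ∫⁻ y, (g i y - s i) ∂μ.withDensity (v i) := by
  calc ∫⁻ y, (F y - ∑ i, s i * v i y) ∂μ
      ≤ ∫⁻ y, ∑ i, v i y * (g i y - s i) ∂μ := by
        refine lintegral_mono_ae (hF.mono fun y hy => ?_)
        calc F y - ∑ i, s i * v i y
            ≤ ∑ i, v i y * g i y - ∑ i, s i * v i y := tsub_le_tsub_right hy _
          _ ≤ ∑ i, (v i y * g i y - s i * v i y) := sum_tsub_sum_le _ _ _
          _ ≤ ∑ i, v i y * (g i y - s i) := by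
              gcongr with i
              rw [mul_comm (s i)]
              exact le_mul_tsub
    _ = ∑ i, ∫⁻ y, v i y * (g i y - s i) ∂μ := lintegral_finsetSum _ (by fun_prop)
    _ = ∑ i, ∫⁻ y, (g i y - s i) ∂μ.withDensity (v i) :=
        Finset.sum_congr rfl fun i _ =>
          (lintegral_withDensity_eq_lintegral_mul μ (hv i) ((hg i).sub_const _)).symm

variable [SFinite μ]

theorem setLIntegral_rearrE_le_mul_sum {F : ℝ → ℝ≥0∞} (hF : Measurable F) (ν : ι → Measure ℝ)
    [∀ i, SFinite (ν i)] (hg : ∀ i, Measurable (g i)) {C : ℝ≥0∞}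
    (h : ∀ s : ι → ℝ≥0∞,
      ∫⁻ y, (F y - C * ∑ i, s i) ∂μ ≤ C * ∑ i, ∫⁻ y, (g i y - s i) ∂ν i) (x : ℝ) :
    ∫⁻ t in Ioo 0 x, rearrE μ F t ≤ C * ∑ i, ∫⁻ t in Ioo 0 x, rearrE (ν i) (g i) t := by
  set s : ι → ℝ≥0∞ := fun i => rearrE (ν i) (g i) x
  calc ∫⁻ t in Ioo 0 x, rearrE μ F t
      ≤ ∫⁻ y, (F y - C * ∑ i, s i) ∂μ + ENNReal.ofReal x * (C * ∑ i, s i) :=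
        setLIntegral_rearrE_le μ hF _ x
    _ ≤ C * ∑ i, ∫⁻ y, (g i y - s i) ∂ν i + ENNReal.ofReal x * (C * ∑ i, s i) := by
        gcongr
        exact h s
    _ = C * ∑ i, (∫⁻ y, (g i y - s i) ∂ν i + ENNReal.ofReal x * s i) := by
        rw [Finset.sum_add_distrib, ← Finset.mul_sum]
        ring
    _ = C * ∑ i, ∫⁻ t in Ioo 0 x, rearrE (ν i) (g i) t := by
        simp_rw [setLIntegral_rearrE_eq _ (hg _), s]

theorem setLIntegral_rearrE_sum_le (hg : ∀ i, Measurable (g i)) (x : ℝ) :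
    ∫⁻ t in Ioo 0 x, rearrE μ (fun y => ∑ i, g i y) t
      ≤ ∑ i, ∫⁻ t in Ioo 0 x, rearrE μ (g i) t := by
  rw [← one_mul (∑ i, _)]
  refine setLIntegral_rearrE_le_mul_sum (by fun_prop) (fun _ => μ) hg (fun s => ?_) x
  rw [one_mul, one_mul, ← lintegral_finsetSum _ fun i _ => (hg i).sub_const _]
  exact lintegral_mono fun y => sum_tsub_sum_le _ _ _

theorem rearrE_sum_const_mul_le (hv : ∀ i, Measurable (v i)) (s : ι → ℝ≥0∞) {t : ℝ} (ht : 0 < t)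
    {M : ℝ≥0∞} (h_mean : ∀ i, ∫⁻ u in Ioo 0 t, rearrE μ (v i) u ≤ ENNReal.ofReal t * M) :
    rearrE μ (fun y => ∑ i, s i * v i y) t ≤ (∑ i, s i) * M := by
  have h_mul : ENNReal.ofReal t * rearrE μ (fun y => ∑ i, s i * v i y) t
      ≤ ENNReal.ofReal t * ((∑ i, s i) * M) := by
    calc ENNReal.ofReal t * rearrE μ (fun y => ∑ i, s i * v i y) t
        ≤ ∫⁻ u in Ioo 0 t, rearrE μ (fun y => ∑ i, s i * v i y) u :=
          mul_rearrE_le_setLIntegral μ (by fun_prop) t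
      _ ≤ ∑ i, ∫⁻ u in Ioo 0 t, rearrE μ (fun y => s i * v i y) u :=
          setLIntegral_rearrE_sum_le (by fun_prop) t
      _ ≤ ∑ i, s i * ∫⁻ u in Ioo 0 t, rearrE μ (v i) u := by
          gcongr with i
          rw [← lintegral_const_mul _ (measurable_rearrE μ (v i))]
          exact lintegral_mono fun u => rearrE_const_mul_le μ (s i) (v i) u
      _ ≤ ∑ i, s i * (ENNReal.ofReal t * M) := by
          gcongr with i
          exact h_mean i
      _ = ENNReal.ofReal t * ((∑ i, s i) * M) := by
          rw [← Finset.sum_mul]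
          ring
  exact (ENNReal.mul_le_mul_iff_right (ENNReal.ofReal_pos.2 ht).ne' ENNReal.ofReal_ne_top).1 h_mul

end Sums

theorem lintegral_rearrE_div_tsub_le {I : Set ℝ} (hI : MeasurableSet I) (hI_pos : I ⊆ Ioi 0)
    {w : ℝ → ℝ≥0∞} (hw : Measurable w) (hw_top : ∀ t ∈ I, w t ≠ ∞) {μ : Measure ℝ} [SFinite μ]
    {F V : ℝ → ℝ≥0∞} (hF : Measurable F) (hV : Measurable V) {c : ℝ≥0∞}
    (hVc : ∀ t ∈ I, rearrE μ V t ≤ c * w t) :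
    ∫⁻ t, (rearrE μ F t / w t - c) ∂(volume.restrict I).withDensity w
      ≤ ∫⁻ y, (F y - V y) ∂μ := by
  calc ∫⁻ t, (rearrE μ F t / w t - c) ∂(volume.restrict I).withDensity w
      = ∫⁻ t in I, w t * (rearrE μ F t / w t - c) :=
        lintegral_withDensity_eq_lintegral_mul _ hw (by fun_prop)
    _ ≤ ∫⁻ t in I, (rearrE μ F t - rearrE μ V t) := by
        refine setLIntegral_mono' hI fun t ht => ?_
        rw [ENNReal.mul_sub fun _ _ => hw_top t ht]
        refine tsub_le_tsub ENNReal.mul_div_le ?_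
        rw [mul_comm]
        exact hVc t ht
    _ ≤ ∫⁻ t in Ioi 0, (rearrE μ F t - rearrE μ V t) := lintegral_mono_set hI_pos
    _ ≤ ∫⁻ y, (F y - V y) ∂μ := lintegral_rearrE_tsub_rearrE_le μ hF hV

instance (I : Set ℝ) (w : ℝ → ℝ) : SFinite (wMeas I w) := by
  unfold wMeas
  infer_instance

theorem rearr_eq_rearrE_of_nonneg {μ : Measure ℝ} {v : ℝ → ℝ} (hv : 0 ≤ᵐ[μ] v) :
    rearr μ v = rearrE μ fun y => ENNReal.ofReal (v y) :=
  rearrE_congr_ae (hv.mono fun _ hy => congrArg ENNReal.ofReal (abs_of_nonneg hy))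

theorem ofReal_abs_sum_le_sum_mul {ι : Type*} (s : Finset ι) {f v : ι → ℝ}
    (hv : ∀ i ∈ s, 0 ≤ v i) (hf : ∀ i ∈ s, v i = 0 → f i = 0) :
    ENNReal.ofReal |∑ i ∈ s, f i|
      ≤ ∑ i ∈ s, ENNReal.ofReal (v i) * ENNReal.ofReal |f i / v i| := by
  calc ENNReal.ofReal |∑ i ∈ s, f i|
      ≤ ENNReal.ofReal (∑ i ∈ s, |f i|) := ENNReal.ofReal_le_ofReal (s.abs_sum_le_sum_abs f)
    _ = ∑ i ∈ s, ENNReal.ofReal |f i| := ENNReal.ofReal_sum_of_nonneg fun i _ => abs_nonneg _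
    _ = ∑ i ∈ s, ENNReal.ofReal (v i) * ENNReal.ofReal |f i / v i| := by
        refine Finset.sum_congr rfl fun i hi => ?_
        rw [← ENNReal.ofReal_mul (hv i hi), ← abs_of_nonneg (hv i hi), ← abs_mul,
          abs_of_nonneg (hv i hi), mul_div_cancel_of_imp' (hf i hi)]

theorem stmt_9_general {ι : Type*} [Fintype ι] {I : Set ℝ} (hI : MeasurableSet I)
    (hI_pos : I ⊆ Ioi 0) {w : ℝ → ℝ} (hw_meas : Measurable w) (hw_nonneg : ∀ t ∈ I, 0 ≤ w t)
    {C : ℝ} (hC : 1 ≤ C) (μ : Measure ℝ) [SFinite μ] {f v : ι → ℝ → ℝ}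
    (hf_meas : ∀ i, Measurable (f i)) (hv_meas : ∀ i, Measurable (v i))
    (hv_nonneg : ∀ i, 0 ≤ᵐ[μ] v i) (hsupp : ∀ i, ∀ᵐ y ∂μ, v i y = 0 → f i y = 0)
    (hreg : ∀ i, ∀ t ∈ I, ∫⁻ u in Ioo 0 t, rearr μ (v i) u ≤ ENNReal.ofReal (C * t * w t))
    (x : ℝ) :
    ∫⁻ t in Ioo 0 x,
        rearrE (wMeas I w)
          (fun s => rearr μ (fun y => ∑ i, f i y) s / ENNReal.ofReal (w s)) t
      ≤ ENNReal.ofReal C *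
          ∑ i, ∫⁻ t in Ioo 0 x,
            rearr (μ.withDensity fun y => ENNReal.ofReal (v i y)) (fun y => f i y / v i y) t := by
  refine setLIntegral_rearrE_le_mul_sum (by unfold rearr; fun_prop) _ (by fun_prop) (fun s => ?_) x
  have h_split (t : ℝ) (ht : t ∈ I) : ENNReal.ofReal (C * t * w t)
      = ENNReal.ofReal t * (ENNReal.ofReal C * ENNReal.ofReal (w t)) := by
    rw [ENNReal.ofReal_mul' (hw_nonneg t ht), ENNReal.ofReal_mul' (hI_pos ht).le]
    ring
  have h_rearr (t : ℝ) (ht : t ∈ I) : rearrE μ (fun y => ∑ i, s i * ENNReal.ofReal (v i y)) t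
      ≤ ENNReal.ofReal C * (∑ i, s i) * ENNReal.ofReal (w t) := by
    rw [mul_comm (ENNReal.ofReal C), mul_assoc]
    refine rearrE_sum_const_mul_le (by fun_prop) s (hI_pos ht) fun i => ?_
    rw [← rearr_eq_rearrE_of_nonneg (hv_nonneg i), ← h_split t ht]
    exact hreg i t ht
  have h_dom : ∀ᵐ y ∂μ, ENNReal.ofReal |∑ i, f i y|
      ≤ ∑ i, ENNReal.ofReal (v i y) * ENNReal.ofReal |f i y / v i y| := by
    filter_upwards [ae_all_iff.2 hv_nonneg, ae_all_iff.2 hsupp] with y hvy hfy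
    exact ofReal_abs_sum_le_sum_mul _ (fun i _ => hvy i) fun i _ => hfy i
  calc _ ≤ ∫⁻ y, (ENNReal.ofReal |∑ i, f i y| - ∑ i, s i * ENNReal.ofReal (v i y)) ∂μ :=
        lintegral_rearrE_div_tsub_le hI hI_pos (by fun_prop) (fun _ _ => ENNReal.ofReal_ne_top)
          (by fun_prop) (by fun_prop) h_rearr
    _ ≤ ∑ i, ∫⁻ y, (ENNReal.ofReal |f i y / v i y| - s i)
          ∂μ.withDensity fun y => ENNReal.ofReal (v i y) :=
        lintegral_tsub_sum_const_mul_le (by fun_prop) (by fun_prop) h_dom s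
    _ ≤ _ := le_mul_of_one_le_left' (ENNReal.one_le_ofReal.2 hC)

/-- If `w` is a regular non-increasing positive weight (`W(t) ≤ C·t·w(t)` on `I`)
then for measurable `f₁,…,fₙ ∈ L₁+L∞` and weights `v₁,…,vₙ ≥ 0` with `vᵢ* = w` and
`supp fᵢ ⊆ supp vᵢ`, for every `x ∈ (0, ∫_I w dm)`:
`∫₀ˣ ((Σᵢ fᵢ)*/w)^{*,w} ≤ C·Σᵢ ∫₀ˣ (fᵢ/vᵢ)^{*,vᵢ}`. -/
theorem stmt_9 (a : ℝ≥0∞) (ha : 0 < a) (w : ℝ → ℝ) (C : ℝ) (hC : 1 ≤ C)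
    (hw_pos : ∀ x ∈ Iset a, 0 < w x) (hw_anti : AntitoneOn w (Iset a)) (hw_meas : Measurable w)
    (hreg : ∀ t ∈ Iset a,
      (∫⁻ s in Set.Ioo 0 t, ENNReal.ofReal (w s)) ≤ ENNReal.ofReal (C * t * w t))
    (n : ℕ) (f v : Fin n → ℝ → ℝ)
    (hf_meas : ∀ i, Measurable (f i))
    (hf_fin : ∀ i, ∀ t ∈ Iset a, rearr (volI a) (f i) t ≠ ∞)
    (hf_loc : ∀ i, ∀ x ∈ Iset a, ∫⁻ t in Set.Ioo 0 x, rearr (volI a) (f i) t ≠ ∞)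
    (hv_meas : ∀ i, Measurable (v i)) (hv_nonneg : ∀ i, ∀ x ∈ Iset a, 0 ≤ v i x)
    (hv_star : ∀ i, ∀ᵐ t ∂(volI a), rearr (volI a) (v i) t = ENNReal.ofReal (w t))
    (hsupp : ∀ i, ∀ᵐ x ∂(volI a), v i x = 0 → f i x = 0)
    (x : ℝ) (hx : 0 < x) (hxb : ENNReal.ofReal x < bval a w) :
    ∫⁻ t in Set.Ioo 0 x,
        rearrE (wMeas (Iset a) w)
          (fun s => rearr (volI a) (fun y => ∑ i, f i y) s / ENNReal.ofReal (w s)) t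
      ≤ ENNReal.ofReal C *
          ∑ i, ∫⁻ t in Set.Ioo 0 x, rearr (wMeas (Iset a) (v i)) (fun y => f i y / v i y) t :=
  stmt_9_general (measurableSet_Iset a) (fun _ ht => ht.1) hw_meas (fun t ht => (hw_pos t ht).le)
    hC (volI a) hf_meas hv_meas
    (fun i => ae_restrict_of_forall_mem (measurableSet_Iset a) (hv_nonneg i)) hsupp
    (fun i t ht => (lintegral_congr_ae (ae_restrict_of_ae_restrict_of_subset
      (Ioo_subset_Iset ht) (hv_star i))).trans_le (hreg t ht)) x
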